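/- Let K ⊆ ℝ^n be a coherent set of desirable gambles and let ḡ ∈ ℝ^n with ḡ ∉ K. Then there exists a matrix A ∈ ℝ^{n×n} with orthonormal rows (A Aᵀ = I) and with every column lexicographically positive (A >_L 0_n) such that Ag >_L 0_n for all g ∈ K and Aḡ ≤_L 0_n. -/

import Mathlib

open Matrix BigOperators

/-- `g <_L f`: `g` is lexicographically less than `f`, i.e. at the first index where they
differ, `g` is smaller. -/
def LexLt {n : ℕ} (g f : Fin n → ℝ) : Prop :=
  ∃ k : Fin n, (∀ i : Fin n, i < k → g i = f i) ∧ g k < f k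

/-- `g ≤_L f`: `g <_L f` or `g = f`. -/
def LexLe {n : ℕ} (g f : Fin n → ℝ) : Prop := LexLt g f ∨ g = f

/-- `A >_L 0_n`: every column of `A` is lexicographically positive. -/
def ColsLexPos {n : ℕ} (A : Matrix (Fin n) (Fin n) ℝ) : Prop :=
  ∀ j : Fin n, LexLt 0 (fun i => A i j)

/-- A coherent set of desirable gambles on an `n`-element outcome space. -/
def CohDesirable {n : ℕ} (K : Set (Fin n → ℝ)) : Prop :=
  (∀ g ∈ K, ∀ f ∈ K, g + f ∈ K) ∧                      -- A1
  (∀ g ∈ K, ∀ l : ℝ, 0 < l → l • g ∈ K) ∧              -- A2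
  (∀ g : Fin n → ℝ, (∀ i, 0 ≤ g i) → g ≠ 0 → g ∈ K) ∧  -- A3
  (0 : Fin n → ℝ) ∉ K                                   -- A4

theorem aux_support {E : Type} [NormedAddCommGroup E] [InnerProductSpace ℝ E]
    [FiniteDimensional ℝ E] [Nontrivial E] (C : Set E) (hC : Convex ℝ C) (h0 : (0 : E) ∉ C) :
    ∃ v : E, ‖v‖ = 1 ∧ ∀ g ∈ C, 0 ≤ inner ℝ v g := by
  have hcomp : IsCompact (Metric.sphere (0 : E) 1) := isCompact_sphere _ _
  have hcl : ∀ g : C, IsClosed {v : E | 0 ≤ inner ℝ v (g : E)} := fun g =>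
    isClosed_le continuous_const (by fun_prop)
  have key := hcomp.inter_iInter_nonempty (fun g : C => {v : E | 0 ≤ inner ℝ v (g : E)}) hcl ?_
  · obtain ⟨v, hv, hv2⟩ := key
    refine ⟨v, by simpa using hv, fun g hg => ?_⟩
    exact Set.mem_iInter.1 hv2 ⟨g, hg⟩
  · intro u
    rcases u.eq_empty_or_nonempty with hu | hu
    · subst hu
      obtain ⟨x, hx⟩ := exists_norm_eq E zero_le_one
      exact ⟨x, by simpa using hx, by simp⟩
    · let S : Set E := Subtype.val '' (u : Set C)
      have hSfin : S.Finite := u.finite_toSet.image _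
      have hSC : convexHull ℝ S ⊆ C := convexHull_min (by rintro _ ⟨x, _, rfl⟩; exact x.2) hC
      have hclS : IsClosed (convexHull ℝ S) := (hSfin.isCompact_convexHull (𝕜 := ℝ)).isClosed
      obtain ⟨f, a, hfa, hf⟩ := geometric_hahn_banach_point_closed (convex_convexHull ℝ S) hclS
        (fun h => h0 (hSC h))
      let w : E := (InnerProductSpace.toDual ℝ E).symm f
      have hw : ∀ x, inner ℝ w x = f x := fun x => InnerProductSpace.toDual_symm_apply
      have hpos : ∀ g ∈ u, 0 < inner ℝ w (g : E) := by
        intro g hg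
        rw [hw]
        have := hf g (subset_convexHull ℝ S ⟨g, hg, rfl⟩)
        simp only [map_zero] at hfa
        linarith
      have hw0 : w ≠ 0 := by
        obtain ⟨g, hg⟩ := hu
        intro h
        have := hpos g hg
        simp [h] at this
      refine ⟨(‖w‖)⁻¹ • w, by simp [norm_smul, hw0], ?_⟩
      simp only [Set.mem_iInter, Set.mem_ofPred_eq]
      intro g hg
      rw [real_inner_smul_left]
      have := hpos g hg
      positivity

theorem aux_main (n : ℕ) : ∀ (E : Type) [NormedAddCommGroup E] [InnerProductSpace ℝ E]
    [FiniteDimensional ℝ E], Module.finrank ℝ E = n → ∀ (C : Set E),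
    (∀ x ∈ C, ∀ y ∈ C, x + y ∈ C) → (∀ x ∈ C, ∀ l : ℝ, 0 < l → l • x ∈ C) → (0 : E) ∉ C →
    ∃ b : Fin n → E, Orthonormal ℝ b ∧ ∀ g ∈ C, LexLt 0 (fun i => inner ℝ (b i) g) := by
  induction n with
  | zero =>
    intro E _ _ _ hE C _ _ h0
    have : Subsingleton E := Module.finrank_zero_iff.1 hE
    refine ⟨Fin.elim0, ⟨fun i => i.elim0, fun i => i.elim0⟩, fun g hg => ?_⟩
    exact absurd (Subsingleton.elim g 0 ▸ hg) h0
  | succ n ih =>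
    intro E _ _ _ hE C hadd hsmul h0
    have : Nontrivial E := Module.nontrivial_of_finrank_pos (R := ℝ) (by omega)
    have hC : Convex ℝ C := by
      rw [convex_iff_forall_pos]
      intro x hx y hy a c ha hc _
      exact hadd _ (hsmul _ hx _ ha) _ (hsmul _ hy _ hc)
    obtain ⟨v, hv, hvC⟩ := aux_support C hC h0
    have hv0 : v ≠ 0 := by intro h; simp [h] at hv
    have : Fact (Module.finrank ℝ E = n + 1) := ⟨hE⟩
    obtain ⟨b, hb, hbC⟩ := ih (ℝ ∙ v)ᗮ (Submodule.finrank_orthogonal_span_singleton hv0)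
      (Subtype.val ⁻¹' C) (fun x hx y hy => hadd _ hx _ hy) (fun x hx l hl => hsmul _ hx l hl)
      h0
    have hvb : ∀ i, inner ℝ v (b i : E) = 0 := fun i =>
      Submodule.mem_orthogonal_singleton_iff_inner_right.1 (b i).2
    refine ⟨Fin.cons v (fun i => (b i : E)), ⟨?_, ?_⟩, ?_⟩
    · intro i
      refine Fin.cases ?_ (fun i => ?_) i
      · simpa using hv
      · simpa using hb.1 i
    · intro i j
      refine Fin.cases ?_ (fun i => ?_) i <;> refine Fin.cases ?_ (fun j => ?_) j
      · simp
      · intro _; simpa using hvb j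
      · intro _; simpa [real_inner_comm] using hvb i
      · intro hij
        have := hb.2 (show i ≠ j from fun h => hij (by rw [h]))
        simpa using this
    · intro g hg
      rcases (hvC g hg).lt_or_eq with h | h
      · exact ⟨0, fun i hi => absurd hi (Fin.not_lt_zero i), by simpa using h⟩
      · have hgm : g ∈ (ℝ ∙ v)ᗮ := Submodule.mem_orthogonal_singleton_iff_inner_right.2 h.symm
        obtain ⟨k, hk, hk2⟩ := hbC ⟨g, hgm⟩ hg
        refine ⟨k.succ, fun i => ?_, by simpa using hk2⟩
        refine Fin.cases ?_ (fun i => ?_) i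
        · intro _; simpa using h
        · intro hi; simpa using hk i (by simpa using hi)

theorem aux_matrix {n : ℕ} (C : Set (Fin n → ℝ)) (hadd : ∀ x ∈ C, ∀ y ∈ C, x + y ∈ C)
    (hsmul : ∀ x ∈ C, ∀ l : ℝ, 0 < l → l • x ∈ C) (h0 : (0 : Fin n → ℝ) ∉ C) :
    ∃ A : Matrix (Fin n) (Fin n) ℝ, A * Aᵀ = 1 ∧ ∀ g ∈ C, LexLt 0 (A.mulVec g) := by
  obtain ⟨b, hb, hbC⟩ := aux_main n (EuclideanSpace ℝ (Fin n)) (by simp)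
    {x | x.ofLp ∈ C} (fun x hx y hy => hadd _ hx _ hy) (fun x hx l hl => hsmul _ hx l hl) h0
  refine ⟨Matrix.of fun i j => b i j, ?_, fun g hg => ?_⟩
  · ext i j
    have := orthonormal_iff_ite.1 hb i j
    simp only [PiLp.inner_apply] at this
    simp only [Matrix.mul_apply, Matrix.transpose_apply, Matrix.of_apply, Matrix.one_apply]
    rw [← this]
    simp [mul_comm]
  · have := hbC (WithLp.toLp 2 g) hg
    convert this using 1
    ext i
    simp [Matrix.mulVec, dotProduct, PiLp.inner_apply, mul_comm]

/-- Lexicographic separation for coherent sets of desirable gambles. -/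
theorem desirable_separation {n : ℕ} (K : Set (Fin n → ℝ)) (hK : CohDesirable K)
    (gbar : Fin n → ℝ) (hgbar : gbar ∉ K) :
    ∃ A : Matrix (Fin n) (Fin n) ℝ, A * Aᵀ = 1 ∧ ColsLexPos A ∧
      (∀ g ∈ K, LexLt 0 (A.mulVec g)) ∧ LexLe (A.mulVec gbar) 0 := by
  obtain ⟨h1, h2, h3, h4⟩ := hK
  have cols : ∀ A : Matrix (Fin n) (Fin n) ℝ, (∀ g ∈ K, LexLt 0 (A.mulVec g)) →
      ColsLexPos A := by
    intro A hA j
    have := hA (Pi.single j 1) (h3 _ (fun i => by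
      by_cases h : i = j
      · subst h; simp
      · simp [h]) (by simp))
    rw [Matrix.mulVec_single_one] at this
    exact this
  by_cases hg0 : gbar = 0
  · obtain ⟨A, hA, hAK⟩ := aux_matrix K h1 h2 h4
    exact ⟨A, hA, cols A hAK, hAK, Or.inr (by simp [hg0])⟩
  · let C : Set (Fin n → ℝ) := {x | ∃ (k : Fin n → ℝ) (l : ℝ), (k ∈ K ∨ k = 0) ∧ 0 ≤ l ∧ (k ∈ K ∨ 0 < l) ∧
      x = k - l • gbar}
    have hKC : ∀ g ∈ K, g ∈ C := fun g hg => ⟨g, 0, Or.inl hg, le_rfl, Or.inl hg, by simp⟩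
    have hbC : -gbar ∈ C := ⟨0, 1, Or.inr rfl, zero_le_one, Or.inr one_pos, by simp⟩
    have key := aux_matrix C ?_ ?_ ?_
    · obtain ⟨A, hA, hAC⟩ := key
      have hAK : ∀ g ∈ K, LexLt 0 (A.mulVec g) := fun g hg => hAC g (hKC g hg)
      refine ⟨A, hA, cols A hAK, hAK, Or.inl ?_⟩
      obtain ⟨k, hk, hk2⟩ := hAC _ hbC
      simp only [Matrix.mulVec_neg, Pi.neg_apply, Pi.zero_apply] at hk hk2
      exact ⟨k, fun i hi => by have := hk i hi; simp only [Pi.zero_apply]; linarith,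
        by simp only [Pi.zero_apply]; linarith⟩
    · rintro x ⟨k, l, hk, hl, hkl, rfl⟩ y ⟨k', l', hk', hl', hkl', rfl⟩
      refine ⟨k + k', l + l', ?_, by positivity, ?_, by module⟩
      · rcases hk with hk | rfl
        · rcases hk' with hk' | rfl
          · exact Or.inl (h1 _ hk _ hk')
          · exact Or.inl (by simpa using hk)
        · simpa using hk'
      · rcases hkl with hkl | hkl
        · rcases hk' with hk' | rfl
          · exact Or.inl (h1 _ hkl _ hk')
          · exact Or.inl (by simpa using hkl)
        · right; linarith
    · rintro x ⟨k, l, hk, hl, hkl, rfl⟩ c hc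
      refine ⟨c • k, c * l, ?_, by positivity, ?_, by module⟩
      · rcases hk with hk | rfl
        · exact Or.inl (h2 _ hk _ hc)
        · right; simp
      · rcases hkl with hkl | hkl
        · exact Or.inl (h2 _ hkl _ hc)
        · right; positivity
    · rintro ⟨k, l, hk, hl, hkl, he⟩
      have he' : k = l • gbar := (sub_eq_zero.1 he.symm)
      rcases hl.lt_or_eq with hl | rfl
      · have hgk : gbar = l⁻¹ • k := by
          rw [he', smul_smul, inv_mul_cancel₀ hl.ne', one_smul]
        rcases hk with hk | rfl
        · exact hgbar (hgk ▸ h2 _ hk _ (inv_pos.2 hl))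
        · exact hg0 (by simpa using hgk)
      · rcases hkl with hkl | hkl
        · exact h4 (by simpa [he'] using hkl)
        · exact lt_irrefl _ hkl
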